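/- Let Ω ⊆ ℝ^d be open. Then the subalgebra 𝒢_c(Ω) of compactly supported generalized functions is dense in 𝒢(Ω) with respect to the sharp topology. -/

import Mathlib

open Filter MeasureTheory Metric Set
open scoped Topology BigOperators

noncomputable section

/-- Euclidean space ℝ^d. -/
abbrev Euc (d : ℕ) : Type := EuclideanSpace ℝ (Fin d)

variable {d : ℕ}

/-- "P ε holds for small ε". -/
def SmallE (P : ℝ → Prop) : Prop :=
  ∃ ε₀ : ℝ, 0 < ε₀ ∧ ∀ ε : ℝ, 0 < ε → ε < ε₀ → P ε

/-- Directional derivative ∂ₑ u in the direction e. -/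
def pderivDir {F : Type} [NormedAddCommGroup F] [NormedSpace ℝ F]
    (e : Euc d) (u : Euc d → F) : Euc d → F :=
  fun x => fderiv ℝ u x e

/-- Multi-index partial derivative ∂^α u. -/
def partialDeriv {F : Type} [NormedAddCommGroup F] [NormedSpace ℝ F]
    (α : Fin d → ℕ) (u : Euc d → F) : Euc d → F :=
  (List.finRange d).foldr
    (fun i v => (pderivDir (EuclideanSpace.single i (1 : ℝ)))^[α i] v) u

/-- p_{α,K}(u) = sup_{x ∈ K} |∂^α u(x)|. -/
def pSemi {F : Type} [NormedAddCommGroup F] [NormedSpace ℝ F]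
    (α : Fin d → ℕ) (K : Set (Euc d)) (u : Euc d → F) : ℝ :=
  sSup ((fun x => ‖partialDeriv α u x‖) '' K)

/-- p_{k,K}(u) = max_{|α| = k} p_{α,K}(u). -/
def pSemiK {F : Type} [NormedAddCommGroup F] [NormedSpace ℝ F]
    (k : ℕ) (K : Set (Euc d)) (u : Euc d → F) : ℝ :=
  sSup {y : ℝ | ∃ α : Fin d → ℕ, (∑ i, α i) = k ∧ y = pSemi α K u}

/-- Moderate nets of smooth functions on Ω. -/
def Moderate (Ω : Set (Euc d)) (u : ℝ → Euc d → ℂ) : Prop :=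
  (∀ ε ∈ Set.Ioo (0:ℝ) 1, ContDiffOn ℝ (⊤ : ℕ∞) (u ε) Ω) ∧
  ∀ K : Set (Euc d), IsCompact K → K ⊆ Ω → ∀ α : Fin d → ℕ,
    ∃ N : ℕ, SmallE fun ε => pSemi α K (u ε) ≤ ε ^ (-(N : ℝ))

/-- Negligible nets of smooth functions on Ω. -/
def Negligible (Ω : Set (Euc d)) (u : ℝ → Euc d → ℂ) : Prop :=
  (∀ ε ∈ Set.Ioo (0:ℝ) 1, ContDiffOn ℝ (⊤ : ℕ∞) (u ε) Ω) ∧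
  ∀ K : Set (Euc d), IsCompact K → K ⊆ Ω → ∀ α : Fin d → ℕ, ∀ m : ℕ,
    SmallE fun ε => pSemi α K (u ε) ≤ ε ^ (m : ℝ)

/-- The algebra of moderate nets. -/
abbrev ModNet (Ω : Set (Euc d)) : Type := {u : ℝ → Euc d → ℂ // Moderate Ω u}

/-- Two moderate nets are identified when their difference is negligible. -/
def nulRel (Ω : Set (Euc d)) (u v : ModNet Ω) : Prop :=
  Negligible Ω (fun ε x => u.1 ε x - v.1 ε x)

/-- The special Colombeau algebra 𝒢(Ω). -/
abbrev Colombeau (Ω : Set (Euc d)) : Type := Quot (nulRel Ω)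

/-- The valuation of a net of complex numbers, with values in EReal
(⊤ corresponding to nets with arbitrarily good decay). -/
def valuation (z : ℝ → ℂ) : EReal :=
  sSup ((fun b : ℝ => (b : EReal)) '' {b : ℝ | SmallE fun ε => ‖z ε‖ ≤ ε ^ b})

/-- The sharp norm e^{-v(z)} of a net of complex numbers. -/
def sharpNorm (z : ℝ → ℂ) : ℝ :=
  if valuation z = ⊤ then 0 else Real.exp (-(valuation z).toReal)

/-- P_{k,K}(u) = ‖(p_{k,K}(u_ε))_ε‖ (computed via a representative;
independent of the representative). -/
def PNorm (Ω : Set (Euc d)) (k : ℕ) (K : Set (Euc d)) (u : Colombeau Ω) : ℝ :=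
  sharpNorm fun ε => ((pSemiK k K ((Quot.out u).1 ε) : ℝ) : ℂ)

/-- P_{α,K}(u) = ‖(p_{α,K}(u_ε))_ε‖ for a multi-index α. -/
def PNormA (Ω : Set (Euc d)) (α : Fin d → ℕ) (K : Set (Euc d)) (u : Colombeau Ω) : ℝ :=
  sharpNorm fun ε => ((pSemi α K ((Quot.out u).1 ε) : ℝ) : ℂ)

/-- The ultra-pseudo-seminorm P_{α,K} applied to the difference u - v. -/
def PNormDiff (Ω : Set (Euc d)) (α : Fin d → ℕ) (K : Set (Euc d))
    (u v : Colombeau Ω) : ℝ :=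
  sharpNorm fun ε =>
    ((pSemi α K (fun x => (Quot.out u).1 ε x - (Quot.out v).1 ε x) : ℝ) : ℂ)

/-- The sharp topology on 𝒢(Ω): generated by the balls of the
ultra-pseudo-seminorms P_{α,K}. -/
def sharpTopology (Ω : Set (Euc d)) : TopologicalSpace (Colombeau Ω) :=
  TopologicalSpace.generateFrom
    {S | ∃ (u : Colombeau Ω) (α : Fin d → ℕ) (K : Set (Euc d)) (r : ℝ),
      IsCompact K ∧ K ⊆ Ω ∧ 0 < r ∧ S = {v | PNormDiff Ω α K u v < r}}

/-- K satisfies the segment condition: there is r > 0 such that every x ∈ K lies on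
d line segments of length r, in linearly independent (unit) directions, contained in K. -/
def SegmentCond (K : Set (Euc d)) : Prop :=
  ∃ r : ℝ, 0 < r ∧ ∀ x ∈ K, ∃ e : Fin d → Euc d, LinearIndependent ℝ e ∧
    ∀ i : Fin d, ‖e i‖ = 1 ∧ ∃ a : ℝ, a ≤ 0 ∧ 0 ≤ a + r ∧
      ∀ t : ℝ, a ≤ t → t ≤ a + r → x + t • e i ∈ K

/-- 𝒢^∞(K). -/
def GInfK (Ω : Set (Euc d)) (K : Set (Euc d)) : Set (Colombeau Ω) :=
  {u | ∃ v : ModNet Ω, Quot.mk (nulRel Ω) v = u ∧ ∃ N : ℕ,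
    ∀ α : Fin d → ℕ, SmallE fun ε => pSemi α K (v.1 ε) ≤ ε ^ (-(N : ℝ))}

/-- 𝒢^{L,a}(K), the generalized functions of sublinear growth with slope
smaller than a on K. -/
def GLaK (Ω : Set (Euc d)) (a : ℝ) (K : Set (Euc d)) : Set (Colombeau Ω) :=
  {u | ∃ v : ModNet Ω, Quot.mk (nulRel Ω) v = u ∧ ∃ a' : ℝ, a' < a ∧ ∃ b : ℝ,
    ∀ α : Fin d → ℕ,
      SmallE fun ε => pSemi α K (v.1 ε) ≤ ε ^ (-(a' * (∑ i, (α i : ℝ))) - b)}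

/-- 𝒢^{L,0}(K) = ⋂_{a>0} 𝒢^{L,a}(K). -/
def GL0K (Ω : Set (Euc d)) (K : Set (Euc d)) : Set (Colombeau Ω) :=
  {u | ∀ a : ℝ, 0 < a → u ∈ GLaK Ω a K}

/-- 𝒢^∞(Ω) = ⋂_{K⊂⊂Ω} 𝒢^∞(K). -/
def GInfOmega (Ω : Set (Euc d)) : Set (Colombeau Ω) :=
  {u | ∀ K : Set (Euc d), IsCompact K → K ⊆ Ω → u ∈ GInfK Ω K}

/-- 𝒢^{L,a}(Ω) = ⋂_{K⊂⊂Ω} 𝒢^{L,a}(K). -/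
def GLaOmega (Ω : Set (Euc d)) (a : ℝ) : Set (Colombeau Ω) :=
  {u | ∀ K : Set (Euc d), IsCompact K → K ⊆ Ω → u ∈ GLaK Ω a K}

/-- 𝒢^{L,0}(Ω) = ⋂_{K⊂⊂Ω} 𝒢^{L,0}(K). -/
def GL0Omega (Ω : Set (Euc d)) : Set (Colombeau Ω) :=
  {u | ∀ K : Set (Euc d), IsCompact K → K ⊆ Ω → u ∈ GL0K Ω K}

/-- u ∈ 𝒢(Ω) is sublinear. -/
def Sublinear (Ω : Set (Euc d)) (u : Colombeau Ω) : Prop :=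
  ∃ v : ModNet Ω, Quot.mk (nulRel Ω) v = u ∧
    ∀ K : Set (Euc d), IsCompact K → K ⊆ Ω →
      ∀ x : ℝ → Euc d, (∀ ε ∈ Set.Ioo (0:ℝ) 1, x ε ∈ K) →
        ∃ k : ℝ, ∃ p : ℕ → ℝ,
          Filter.Tendsto (fun n : ℕ => p n + k * n) atTop atTop ∧
          ∀ α : Fin d → ℕ,
            SmallE fun ε => ‖partialDeriv α (v.1 ε) (x ε)‖ ≤ ε ^ (p (∑ i, α i))

/-- The scaled mollifier ψ_δ(x) = δ^{-d} ψ(x/δ). -/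
def mollify (ψ : Euc d → ℝ) (δ : ℝ) : Euc d → ℝ :=
  fun x => ((δ : ℝ) ^ d)⁻¹ * ψ (δ⁻¹ • x)

/-- Convolution u ⋆ ψ (with a real-valued kernel ψ). -/
def conv (u : Euc d → ℂ) (ψ : Euc d → ℝ) : Euc d → ℂ :=
  fun x => ∫ t : Euc d, u (x - t) * ((ψ t : ℝ) : ℂ)

/-- 𝒢_c(Ω): compactly supported generalized functions (restriction to Ω∖K
is 0 in 𝒢(Ω∖K), i.e. some representative is negligible on Ω∖K). -/
def GCompact (Ω : Set (Euc d)) : Set (Colombeau Ω) :=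
  {u | ∃ v : ModNet Ω, Quot.mk (nulRel Ω) v = u ∧
    ∃ K : Set (Euc d), IsCompact K ∧ K ⊆ Ω ∧ Negligible (Ω \ K) v.1}

/-!
Given finitely many subbasic neighbourhoods of `u` in the sharp topology, the compact sets of their
seminorms have compact union `K ⊆ Ω`. Multiply a representative of `u` by a smooth cutoff `χ` that
is `1` near `K` and has compact support in `Ω`. Since moderate nets form an algebra, `χ u` is a
generalized function; it is compactly supported, and near `K` it agrees with `u` up to a negligible
net. Hence `P_{α,K'}(w - χ u) = P_{α,K'}(w - u)` for every `w` and every `K' ⊆ K`: the seminorms do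
not distinguish `χ u` from `u`, and `χ u` lies in all the given neighbourhoods.
-/

section PartialDerivatives

open scoped ContDiff

variable {F : Type} [NormedAddCommGroup F] [NormedSpace ℝ F] {Ω : Set (Euc d)} {u v : Euc d → F}

lemma differentiableAt_of_contDiffOn {E G : Type*} [NormedAddCommGroup E] [NormedSpace ℝ E]
    [NormedAddCommGroup G] [NormedSpace ℝ G] {Ω : Set E} {u : E → G} (hΩ : IsOpen Ω)
    (hu : ContDiffOn ℝ ∞ u Ω) {x : E} (hx : x ∈ Ω) : DifferentiableAt ℝ u x :=
  (hu.contDiffAt (hΩ.mem_nhds hx)).differentiableAt (by simp)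

lemma contDiffOn_pderivDir (hΩ : IsOpen Ω) (hu : ContDiffOn ℝ ∞ u Ω) (e : Euc d) :
    ContDiffOn ℝ ∞ (pderivDir e u) Ω :=
  (hu.fderiv_of_isOpen hΩ (by simp)).clm_apply contDiffOn_const

lemma eqOn_pderivDir (hΩ : IsOpen Ω) (huv : EqOn u v Ω) (e : Euc d) :
    EqOn (pderivDir e u) (pderivDir e v) Ω :=
  fun _ hx => congrArg (fun L : Euc d →L[ℝ] F => L e)
    (huv.eventuallyEq_of_mem (hΩ.mem_nhds hx)).fderiv_eq

lemma pderivDir_comm (hΩ : IsOpen Ω) (hu : ContDiffOn ℝ ∞ u Ω) (e f : Euc d) :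
    EqOn (pderivDir e (pderivDir f u)) (pderivDir f (pderivDir e u)) Ω := by
  intro x hx
  have hux : ContDiffAt ℝ ∞ u x := hu.contDiffAt (hΩ.mem_nhds hx)
  have hdiff : DifferentiableAt ℝ (fderiv ℝ u) x :=
    (hux.fderiv_right (m := ∞) (by simp)).differentiableAt (by simp)
  have second_deriv (e f : Euc d) :
      pderivDir e (pderivDir f u) x = fderiv ℝ (fderiv ℝ u) x e f := by
    change fderiv ℝ (fun y => fderiv ℝ u y f) x e = _
    rw [fderiv_clm_apply hdiff (differentiableAt_const f)]
    simp
  rw [second_deriv, second_deriv]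
  exact hux.isSymmSndFDerivAt (by simpa using WithTop.coe_le_coe.2 (OrderTop.le_top (2 : ℕ∞))) e f

lemma pderivDir_mul {A : Type} [NormedRing A] [NormedAlgebra ℝ A] {u v : Euc d → A}
    (hΩ : IsOpen Ω) (hu : ContDiffOn ℝ ∞ u Ω) (hv : ContDiffOn ℝ ∞ v Ω) (e : Euc d) :
    EqOn (pderivDir e (u * v)) (pderivDir e u * v + u * pderivDir e v) Ω := by
  intro x hx
  simp [pderivDir, fderiv_mul' (differentiableAt_of_contDiffOn hΩ hu hx)
    (differentiableAt_of_contDiffOn hΩ hv hx), add_comm]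

/-- The iterated partial derivative `∂_{i₁} ⋯ ∂_{iₙ} u` along a list `[i₁, …, iₙ]` of coordinates;
the derivative in the last coordinate of the list is taken first. -/
def iteratedPderiv (l : List (Fin d)) (u : Euc d → F) : Euc d → F :=
  l.foldr (fun i => pderivDir (EuclideanSpace.single i (1 : ℝ))) u

lemma iteratedPderiv_cons (i : Fin d) (l : List (Fin d)) (u : Euc d → F) :
    iteratedPderiv (i :: l) u = pderivDir (EuclideanSpace.single i 1) (iteratedPderiv l u) := rfl

lemma iteratedPderiv_concat (l : List (Fin d)) (i : Fin d) (u : Euc d → F) :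
    iteratedPderiv (l ++ [i]) u = iteratedPderiv l (pderivDir (EuclideanSpace.single i 1) u) :=
  List.foldr_append

lemma contDiffOn_iteratedPderiv (hΩ : IsOpen Ω) (hu : ContDiffOn ℝ ∞ u Ω) (l : List (Fin d)) :
    ContDiffOn ℝ ∞ (iteratedPderiv l u) Ω := by
  induction l with
  | nil => exact hu
  | cons i l ih => exact contDiffOn_pderivDir hΩ ih _

lemma eqOn_iteratedPderiv (hΩ : IsOpen Ω) (huv : EqOn u v Ω) (l : List (Fin d)) :
    EqOn (iteratedPderiv l u) (iteratedPderiv l v) Ω := by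
  induction l with
  | nil => exact huv
  | cons i l ih => exact eqOn_pderivDir hΩ ih _

lemma iteratedPderiv_perm (hΩ : IsOpen Ω) (hu : ContDiffOn ℝ ∞ u Ω) {l₁ l₂ : List (Fin d)}
    (h : l₁.Perm l₂) : EqOn (iteratedPderiv l₁ u) (iteratedPderiv l₂ u) Ω := by
  induction h with
  | nil => exact eqOn_refl _ _
  | cons i _ ih => exact eqOn_pderivDir hΩ ih _
  | swap i j l => exact pderivDir_comm hΩ (contDiffOn_iteratedPderiv hΩ hu l) _ _
  | trans _ _ ih₁ ih₂ => exact ih₁.trans ih₂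

lemma iteratedPderiv_add (hΩ : IsOpen Ω) (hu : ContDiffOn ℝ ∞ u Ω) (hv : ContDiffOn ℝ ∞ v Ω)
    (l : List (Fin d)) :
    EqOn (iteratedPderiv l (u + v)) (iteratedPderiv l u + iteratedPderiv l v) Ω := by
  induction l with
  | nil => exact eqOn_refl _ _
  | cons i l ih =>
    intro x hx
    rw [iteratedPderiv_cons, eqOn_pderivDir hΩ ih _ hx, pderivDir,
      fderiv_add
        (differentiableAt_of_contDiffOn hΩ (contDiffOn_iteratedPderiv hΩ hu l) hx)
        (differentiableAt_of_contDiffOn hΩ (contDiffOn_iteratedPderiv hΩ hv l) hx)]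
    rfl

lemma iteratedPderiv_neg (l : List (Fin d)) (u : Euc d → F) :
    iteratedPderiv l (-u) = -iteratedPderiv l u := by
  induction l with
  | nil => rfl
  | cons i l ih =>
    ext x
    simp [iteratedPderiv_cons, ih, pderivDir, fderiv_neg]

lemma iteratedPderiv_zero (l : List (Fin d)) : iteratedPderiv l (0 : Euc d → F) = 0 := by
  induction l with
  | nil => rfl
  | cons i l ih =>
    ext x
    simp [iteratedPderiv_cons, ih, pderivDir]

/-- The multi-index `α` as the list of coordinates in which `i` occurs `α i` times, in increasing
order. -/
def multiIndexList (α : Fin d → ℕ) : List (Fin d) :=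
  (List.finRange d).flatMap fun i => List.replicate (α i) i

lemma count_multiIndexList (α : Fin d → ℕ) (i : Fin d) : (multiIndexList α).count i = α i := by
  simp [multiIndexList, List.count_flatMap, Function.comp_def, List.count_replicate,
    ← Fin.sum_univ_def]

lemma foldr_replicate_eq_iterate {ι X : Type*} (f : ι → X → X) (i : ι) (n : ℕ) (x : X) :
    (List.replicate n i).foldr f x = (f i)^[n] x := by
  induction n with
  | zero => rfl
  | succ n ih => rw [List.replicate_succ, List.foldr_cons, ih, Function.iterate_succ_apply']

lemma partialDeriv_eq_iteratedPderiv (α : Fin d → ℕ) (u : Euc d → F) :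
    partialDeriv α u = iteratedPderiv (multiIndexList α) u := by
  simp only [partialDeriv, iteratedPderiv, multiIndexList, List.foldr_flatMap,
    foldr_replicate_eq_iterate]

lemma iteratedPderiv_eq_partialDeriv (hΩ : IsOpen Ω) (hu : ContDiffOn ℝ ∞ u Ω)
    (l : List (Fin d)) : EqOn (iteratedPderiv l u) (partialDeriv (fun i => l.count i) u) Ω := by
  rw [partialDeriv_eq_iteratedPderiv]
  exact iteratedPderiv_perm hΩ hu
    (List.perm_iff_count.2 fun i => (count_multiIndexList (fun i => l.count i) i).symm)

lemma continuousOn_partialDeriv (hΩ : IsOpen Ω) (hu : ContDiffOn ℝ ∞ u Ω) (α : Fin d → ℕ) :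
    ContinuousOn (partialDeriv α u) Ω := by
  rw [partialDeriv_eq_iteratedPderiv]
  exact (contDiffOn_iteratedPderiv hΩ hu _).continuousOn

end PartialDerivatives

section Seminorms

open scoped ContDiff

variable {F : Type} [NormedAddCommGroup F] [NormedSpace ℝ F] {Ω K : Set (Euc d)}
  {u v : Euc d → F}

lemma pSemi_nonneg (α : Fin d → ℕ) (K : Set (Euc d)) (u : Euc d → F) : 0 ≤ pSemi α K u :=
  Real.sSup_nonneg (forall_mem_image.2 fun _ _ => norm_nonneg _)

lemma pSemi_le {α : Fin d → ℕ} {c : ℝ} (hc : 0 ≤ c) (h : ∀ x ∈ K, ‖partialDeriv α u x‖ ≤ c) :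
    pSemi α K u ≤ c :=
  Real.sSup_le (forall_mem_image.2 h) hc

lemma norm_partialDeriv_le_pSemi (hΩ : IsOpen Ω) (hK : IsCompact K) (hKΩ : K ⊆ Ω)
    (hu : ContDiffOn ℝ ∞ u Ω) (α : Fin d → ℕ) {x : Euc d} (hx : x ∈ K) :
    ‖partialDeriv α u x‖ ≤ pSemi α K u :=
  le_csSup (hK.bddAbove_image ((continuousOn_partialDeriv hΩ hu α).mono hKΩ).norm)
    (mem_image_of_mem _ hx)

lemma pSemi_congr (hΩ : IsOpen Ω) (hKΩ : K ⊆ Ω) (huv : EqOn u v Ω) (α : Fin d → ℕ) :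
    pSemi α K u = pSemi α K v := by
  refine congrArg sSup (image_congr fun x hx => ?_)
  rw [partialDeriv_eq_iteratedPderiv, partialDeriv_eq_iteratedPderiv,
    eqOn_iteratedPderiv hΩ huv _ (hKΩ hx)]

lemma pSemi_zero (α : Fin d → ℕ) (K : Set (Euc d)) : pSemi α K (0 : Euc d → F) = 0 :=
  (pSemi_le le_rfl fun x _ => by
    simp [partialDeriv_eq_iteratedPderiv, iteratedPderiv_zero]).antisymm (pSemi_nonneg _ _ _)

lemma pSemi_neg (α : Fin d → ℕ) (K : Set (Euc d)) (u : Euc d → F) :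
    pSemi α K (-u) = pSemi α K u := by
  simp [pSemi, partialDeriv_eq_iteratedPderiv, iteratedPderiv_neg]

lemma pSemi_add_le (hΩ : IsOpen Ω) (hK : IsCompact K) (hKΩ : K ⊆ Ω) (hu : ContDiffOn ℝ ∞ u Ω)
    (hv : ContDiffOn ℝ ∞ v Ω) (α : Fin d → ℕ) :
    pSemi α K (u + v) ≤ pSemi α K u + pSemi α K v := by
  refine pSemi_le (add_nonneg (pSemi_nonneg _ _ _) (pSemi_nonneg _ _ _)) fun x hx => ?_
  calc ‖partialDeriv α (u + v) x‖ = ‖partialDeriv α u x + partialDeriv α v x‖ := by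
        simp only [partialDeriv_eq_iteratedPderiv, iteratedPderiv_add hΩ hu hv _ (hKΩ hx),
          Pi.add_apply]
    _ ≤ ‖partialDeriv α u x‖ + ‖partialDeriv α v x‖ := norm_add_le _ _
    _ ≤ pSemi α K u + pSemi α K v :=
        add_le_add (norm_partialDeriv_le_pSemi hΩ hK hKΩ hu α hx)
          (norm_partialDeriv_le_pSemi hΩ hK hKΩ hv α hx)

lemma abs_pSemi_sub_pSemi_le (hΩ : IsOpen Ω) (hK : IsCompact K) (hKΩ : K ⊆ Ω)
    (hu : ContDiffOn ℝ ∞ u Ω) (hv : ContDiffOn ℝ ∞ v Ω) (α : Fin d → ℕ) :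
    |pSemi α K u - pSemi α K v| ≤ pSemi α K (u - v) := by
  have huv : ContDiffOn ℝ ∞ (u - v) Ω := hu.sub hv
  have hle : pSemi α K u ≤ pSemi α K (u - v) + pSemi α K v := by
    simpa using pSemi_add_le hΩ hK hKΩ huv hv α
  have hge : pSemi α K v ≤ pSemi α K (u - v) + pSemi α K u := by
    have hvu : ContDiffOn ℝ ∞ (v - u) Ω := hv.sub hu
    rw [← pSemi_neg α K (u - v), neg_sub]
    simpa using pSemi_add_le hΩ hK hKΩ hvu hu α
  exact abs_sub_le_iff.2 ⟨by linarith, by linarith⟩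

end Seminorms

section Asymptotics

lemma smallE_iff_eventually (P : ℝ → Prop) : SmallE P ↔ ∀ᶠ ε in 𝓝[>] (0 : ℝ), P ε := by
  simp only [SmallE, Filter.Eventually, mem_nhdsGT_iff_exists_Ioo_subset, subset_def, mem_Ioo,
    mem_Ioi, mem_ofPred_eq, and_imp]

lemma eventually_mem_Ioo_zero_one : ∀ᶠ ε in 𝓝[>] (0 : ℝ), ε ∈ Ioo (0 : ℝ) 1 :=
  Ioo_mem_nhdsGT one_pos

lemma eventually_const_mul_rpow_le (C : ℝ) {a b : ℝ} (hab : a < b) :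
    ∀ᶠ ε in 𝓝[>] (0 : ℝ), C * ε ^ b ≤ ε ^ a := by
  filter_upwards [self_mem_nhdsWithin,
    (tendsto_rpow_neg_nhdsGT_zero (sub_neg.2 hab)).eventually_ge_atTop C] with ε hε hC
  calc C * ε ^ b ≤ ε ^ (a - b) * ε ^ b := by gcongr; exact Real.rpow_nonneg (le_of_lt hε) _
    _ = ε ^ a := by rw [← Real.rpow_add hε, sub_add_cancel]

lemma valuation_le_of_norm_sub_le {z w : ℝ → ℂ}
    (h : ∀ m : ℕ, ∀ᶠ ε in 𝓝[>] (0 : ℝ), ‖z ε - w ε‖ ≤ ε ^ (m : ℝ)) :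
    valuation z ≤ valuation w := by
  refine sSup_le (forall_mem_image.2 fun b hb => le_of_forall_lt fun c hc => ?_)
  obtain ⟨b', hcb', hb'b⟩ := EReal.lt_iff_exists_real_btwn.1 hc
  refine hcb'.trans_le (le_sSup (mem_image_of_mem _ ?_))
  rw [mem_ofPred_eq, smallE_iff_eventually] at hb ⊢
  obtain ⟨m, hbm⟩ := exists_nat_ge b
  filter_upwards [hb, h m, eventually_mem_Ioo_zero_one,
    eventually_const_mul_rpow_le 2 (EReal.coe_lt_coe_iff.1 hb'b)] with ε hz hzw hε hpow
  calc ‖w ε‖ ≤ ‖z ε‖ + ‖z ε - w ε‖ := norm_le_insert _ _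
    _ ≤ ε ^ b + ε ^ b :=
        add_le_add hz (hzw.trans (Real.rpow_le_rpow_of_exponent_ge hε.1 hε.2.le hbm))
    _ ≤ ε ^ b' := by rwa [← two_mul]

lemma sharpNorm_congr {z w : ℝ → ℂ}
    (h : ∀ m : ℕ, ∀ᶠ ε in 𝓝[>] (0 : ℝ), ‖z ε - w ε‖ ≤ ε ^ (m : ℝ)) :
    sharpNorm z = sharpNorm w := by
  have hval : valuation z = valuation w :=
    (valuation_le_of_norm_sub_le h).antisymm
      (valuation_le_of_norm_sub_le (by simpa only [norm_sub_rev] using h))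
  rw [sharpNorm, sharpNorm, hval]

/-- A net of functions is moderate on a set `K` if it is `O(ε^{-N})` for some `N`, uniformly on
`K`. This is the growth condition that `Moderate` imposes on each partial derivative. -/
def ModerateOn {X F : Type*} [Norm F] (K : Set X) (w : ℝ → X → F) : Prop :=
  ∃ N : ℕ, ∀ᶠ ε in 𝓝[>] (0 : ℝ), ∀ x ∈ K, ‖w ε x‖ ≤ ε ^ (-(N : ℝ))

namespace ModerateOn

variable {X : Type*} {K : Set X}

lemma congr {F : Type*} [Norm F] {w w' : ℝ → X → F} (hw : ModerateOn K w)
    (h : ∀ ε ∈ Ioo (0 : ℝ) 1, EqOn (w ε) (w' ε) K) : ModerateOn K w' := by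
  obtain ⟨N, hN⟩ := hw
  refine ⟨N, ?_⟩
  filter_upwards [hN, eventually_mem_Ioo_zero_one] with ε hwN hε x hx
  exact h ε hε hx ▸ hwN x hx

lemma const {F : Type*} [Norm F] {f : X → F} {C : ℝ} (hC : ∀ x ∈ K, ‖f x‖ ≤ C) :
    ModerateOn K (fun _ => f) := by
  refine ⟨1, ?_⟩
  filter_upwards [eventually_const_mul_rpow_le C (show (-(1 : ℕ) : ℝ) < 0 by simp)] with ε hε x hx
  exact (hC x hx).trans (by simpa using hε)

lemma add {F : Type*} [SeminormedAddGroup F] {w w' : ℝ → X → F} (hw : ModerateOn K w)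
    (hw' : ModerateOn K w') : ModerateOn K (w + w') := by
  obtain ⟨N, hN⟩ := hw
  obtain ⟨M, hM⟩ := hw'
  refine ⟨max N M + 1, ?_⟩
  filter_upwards [hN, hM, eventually_mem_Ioo_zero_one,
    eventually_const_mul_rpow_le 2
      (show -((max N M + 1 : ℕ) : ℝ) < -((max N M : ℕ) : ℝ) by simp)] with ε hwN hwM hε hpow x hx
  have hmono {k : ℕ} (hk : k ≤ max N M) : ε ^ (-(k : ℝ)) ≤ ε ^ (-((max N M : ℕ) : ℝ)) :=
    Real.rpow_le_rpow_of_exponent_ge hε.1 hε.2.le (neg_le_neg (Nat.cast_le.2 hk))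
  calc ‖w ε x + w' ε x‖ ≤ ‖w ε x‖ + ‖w' ε x‖ := norm_add_le _ _
    _ ≤ ε ^ (-((max N M : ℕ) : ℝ)) + ε ^ (-((max N M : ℕ) : ℝ)) :=
        add_le_add ((hwN x hx).trans (hmono (le_max_left N M)))
          ((hwM x hx).trans (hmono (le_max_right N M)))
    _ ≤ ε ^ (-((max N M + 1 : ℕ) : ℝ)) := by rwa [← two_mul]

lemma mul {A : Type*} [NonUnitalSeminormedRing A] {w w' : ℝ → X → A} (hw : ModerateOn K w)
    (hw' : ModerateOn K w') : ModerateOn K (w * w') := by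
  obtain ⟨N, hN⟩ := hw
  obtain ⟨M, hM⟩ := hw'
  refine ⟨N + M, ?_⟩
  filter_upwards [hN, hM, self_mem_nhdsWithin] with ε hwN hwM hε x hx
  calc ‖w ε x * w' ε x‖ ≤ ‖w ε x‖ * ‖w' ε x‖ := norm_mul_le _ _
    _ ≤ ε ^ (-(N : ℝ)) * ε ^ (-(M : ℝ)) :=
        mul_le_mul (hwN x hx) (hwM x hx) (norm_nonneg _) (Real.rpow_nonneg (le_of_lt hε) _)
    _ = ε ^ (-((N + M : ℕ) : ℝ)) := by rw [← Real.rpow_add hε]; push_cast; congr 1; ring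

end ModerateOn

end Asymptotics

section ModerateNets

open scoped ContDiff

variable {Ω K : Set (Euc d)}

lemma moderateOn_partialDeriv_iff {F : Type} [NormedAddCommGroup F] [NormedSpace ℝ F]
    (hΩ : IsOpen Ω) (hK : IsCompact K) (hKΩ : K ⊆ Ω) {u : ℝ → Euc d → F}
    (hu : ∀ ε ∈ Ioo (0 : ℝ) 1, ContDiffOn ℝ ∞ (u ε) Ω) (α : Fin d → ℕ) :
    ModerateOn K (fun ε => partialDeriv α (u ε)) ↔
      ∃ N : ℕ, SmallE fun ε => pSemi α K (u ε) ≤ ε ^ (-(N : ℝ)) := by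
  refine exists_congr fun N => ?_
  rw [smallE_iff_eventually]
  refine eventually_congr ?_
  filter_upwards [eventually_mem_Ioo_zero_one] with ε hε
  exact ⟨pSemi_le (Real.rpow_nonneg hε.1.le _), fun h x hx =>
    (norm_partialDeriv_le_pSemi hΩ hK hKΩ (hu ε hε) α hx).trans h⟩

/-- By symmetry of higher derivatives, the order of differentiation in `Moderate` is irrelevant. -/
lemma moderate_iff_iteratedPderiv (hΩ : IsOpen Ω) {u : ℝ → Euc d → ℂ} :
    Moderate Ω u ↔ (∀ ε ∈ Ioo (0 : ℝ) 1, ContDiffOn ℝ ∞ (u ε) Ω) ∧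
      ∀ K : Set (Euc d), IsCompact K → K ⊆ Ω → ∀ l : List (Fin d),
        ModerateOn K (fun ε => iteratedPderiv l (u ε)) := by
  refine and_congr_right fun hu => forall₃_congr fun K hK hKΩ => ?_
  simp_rw [← moderateOn_partialDeriv_iff hΩ hK hKΩ hu]
  refine ⟨fun h l => (h _).congr fun ε hε =>
    ((iteratedPderiv_eq_partialDeriv hΩ (hu ε hε) l).mono hKΩ).symm, fun h α => ?_⟩
  simpa only [partialDeriv_eq_iteratedPderiv] using h (multiIndexList α)

namespace Moderate

lemma const {c : Euc d → ℂ} (hΩ : IsOpen Ω) (hc : ContDiffOn ℝ ∞ c Ω) :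
    Moderate Ω (fun _ => c) := by
  refine (moderate_iff_iteratedPderiv hΩ).2 ⟨fun _ _ => hc, fun K hK hKΩ l => ?_⟩
  obtain ⟨C, hC⟩ := hK.exists_bound_of_continuousOn
    ((contDiffOn_iteratedPderiv hΩ hc l).continuousOn.mono hKΩ)
  exact ModerateOn.const hC

lemma pderivDir_single {u : ℝ → Euc d → ℂ} (hΩ : IsOpen Ω) (hu : Moderate Ω u) (i : Fin d) :
    Moderate Ω (fun ε => pderivDir (EuclideanSpace.single i 1) (u ε)) := by
  rw [moderate_iff_iteratedPderiv hΩ] at hu ⊢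
  refine ⟨fun ε hε => contDiffOn_pderivDir hΩ (hu.1 ε hε) _, fun K hK hKΩ l => ?_⟩
  simpa only [iteratedPderiv_concat] using hu.2 K hK hKΩ (l ++ [i])

-- Induct on the list of derivatives from the innermost one: `∂ᵢ (u v) = ∂ᵢ u * v + u * ∂ᵢ v` is a
-- sum of products of moderate nets.
lemma mul {u v : ℝ → Euc d → ℂ} (hΩ : IsOpen Ω) (hu : Moderate Ω u) (hv : Moderate Ω v) :
    Moderate Ω (u * v) := by
  refine (moderate_iff_iteratedPderiv hΩ).2
    ⟨fun ε hε => (hu.1 ε hε).mul (hv.1 ε hε), fun K hK hKΩ l => ?_⟩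
  induction l using List.reverseRecOn generalizing u v with
  | nil =>
    exact (((moderate_iff_iteratedPderiv hΩ).1 hu).2 K hK hKΩ []).mul
      (((moderate_iff_iteratedPderiv hΩ).1 hv).2 K hK hKΩ [])
  | append_singleton l i ih =>
    have hu' := hu.pderivDir_single hΩ i
    have hv' := hv.pderivDir_single hΩ i
    refine ((ih hu' hv).add (ih hu hv')).congr fun ε hε x hx => ?_
    rw [iteratedPderiv_concat, Pi.mul_apply,
      eqOn_iteratedPderiv hΩ (pderivDir_mul hΩ (hu.1 ε hε) (hv.1 ε hε) _) l (hKΩ hx)]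
    exact (iteratedPderiv_add hΩ ((hu'.1 ε hε).mul (hv.1 ε hε))
      ((hu.1 ε hε).mul (hv'.1 ε hε)) l (hKΩ hx)).symm

end Moderate

end ModerateNets

section NegligibleNets

variable {Ω Ω' : Set (Euc d)} {u v : ℝ → Euc d → ℂ}

namespace Negligible

lemma zero (Ω : Set (Euc d)) : Negligible Ω 0 := by
  refine ⟨fun _ _ => contDiffOn_const, fun K _ _ α m => ?_⟩
  exact ⟨1, one_pos, fun ε hε _ => (pSemi_zero α K).trans_le (Real.rpow_nonneg hε.le _)⟩

lemma neg (hu : Negligible Ω u) : Negligible Ω (-u) :=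
  ⟨fun ε hε => (hu.1 ε hε).neg, fun K hK hKΩ α m => by
    simpa only [Pi.neg_apply, pSemi_neg] using hu.2 K hK hKΩ α m⟩

lemma add (hΩ : IsOpen Ω) (hu : Negligible Ω u) (hv : Negligible Ω v) :
    Negligible Ω (u + v) := by
  refine ⟨fun ε hε => (hu.1 ε hε).add (hv.1 ε hε), fun K hK hKΩ α m => ?_⟩
  have hum := hu.2 K hK hKΩ α (m + 1)
  have hvm := hv.2 K hK hKΩ α (m + 1)
  rw [smallE_iff_eventually] at hum hvm ⊢
  filter_upwards [hum, hvm, eventually_mem_Ioo_zero_one, eventually_const_mul_rpow_le 2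
    (show (m : ℝ) < (m + 1 : ℕ) by simp)] with ε huε hvε hε hpow
  calc pSemi α K (u ε + v ε) ≤ pSemi α K (u ε) + pSemi α K (v ε) :=
        pSemi_add_le hΩ hK hKΩ (hu.1 ε hε) (hv.1 ε hε) α
    _ ≤ ε ^ ((m + 1 : ℕ) : ℝ) + ε ^ ((m + 1 : ℕ) : ℝ) := add_le_add huε hvε
    _ ≤ ε ^ (m : ℝ) := by rwa [← two_mul]

lemma mono (hu : Negligible Ω u) (h : Ω' ⊆ Ω) : Negligible Ω' u :=
  ⟨fun ε hε => (hu.1 ε hε).mono h, fun K hK hKΩ' => hu.2 K hK (hKΩ'.trans h)⟩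

lemma congr (hΩ : IsOpen Ω) (hu : Negligible Ω u) (huv : ∀ ε, EqOn (u ε) (v ε) Ω) :
    Negligible Ω v :=
  ⟨fun ε hε => (hu.1 ε hε).congr (huv ε).symm, fun K hK hKΩ α m => by
    simpa only [pSemi_congr hΩ hKΩ (huv _)] using hu.2 K hK hKΩ α m⟩

end Negligible

lemma nulRel_equivalence (hΩ : IsOpen Ω) : Equivalence (nulRel Ω) where
  refl u := (Negligible.zero Ω).congr hΩ fun ε x _ => (sub_self (u.1 ε x)).symm
  symm h := h.neg.congr hΩ fun _ _ _ => neg_sub _ _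
  trans h₁ h₂ := (h₁.add hΩ h₂).congr hΩ fun _ _ _ => sub_add_sub_cancel _ _ _

end NegligibleNets

section Density

open scoped ContDiff

variable {Ω Ω' K : Set (Euc d)}

lemma PNormDiff_eq_of_negligible_sub (hΩ' : IsOpen Ω') (hΩ'Ω : Ω' ⊆ Ω) (hK : IsCompact K)
    (hKΩ' : K ⊆ Ω') {u v : Colombeau Ω}
    (huv : Negligible Ω' ((Quot.out u).1 - (Quot.out v).1)) (α : Fin d → ℕ) (w : Colombeau Ω) :
    PNormDiff Ω α K w u = PNormDiff Ω α K w v := by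
  refine sharpNorm_congr fun m => ?_
  have hm := huv.neg.2 K hK hKΩ' α m
  rw [smallE_iff_eventually] at hm
  filter_upwards [hm, eventually_mem_Ioo_zero_one] with ε hmε hε
  have hsmooth (z : Colombeau Ω) : ContDiffOn ℝ ∞ ((Quot.out z).1 ε) Ω' :=
    ((Quot.out z).2.1 ε hε).mono hΩ'Ω
  rw [← Complex.ofReal_sub, Complex.norm_real, Real.norm_eq_abs]
  refine (abs_pSemi_sub_pSemi_le hΩ' hK hKΩ' ((hsmooth w).sub (hsmooth u))
    ((hsmooth w).sub (hsmooth v)) α).trans (le_of_eq_of_le ?_ hmε)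
  congr 1
  funext x
  simp

lemma exists_contDiff_cutoff {E : Type*} [NormedAddCommGroup E] [NormedSpace ℝ E]
    [FiniteDimensional ℝ E] {Ω K : Set E} (hΩ : IsOpen Ω) (hK : IsCompact K) (hKΩ : K ⊆ Ω) :
    ∃ χ : E → ℝ, ContDiff ℝ ∞ χ ∧ (∀ᶠ x in 𝓝ˢ K, χ x = 1) ∧ HasCompactSupport χ ∧
      tsupport χ ⊆ Ω := by
  obtain ⟨L, hL, hKL, hLΩ⟩ := exists_compact_between hK hΩ hKΩ
  obtain ⟨χ, hχ_one, hχ_zero, -⟩ := exists_contMDiffMap_one_nhds_of_subset_interior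
    (n := ⊤) (modelWithCornersSelf ℝ E) hK.isClosed hKL
  have hsupp : tsupport χ ⊆ L := closure_minimal
    (fun x hx => of_not_not fun hxL => hx (hχ_zero x hxL)) hL.isClosed
  exact ⟨χ, χ.contMDiff.contDiff, hχ_one, hL.of_isClosed_subset (isClosed_tsupport _) hsupp,
    hsupp.trans hLΩ⟩

lemma mk_mem_GCompact_of_eqOn_zero (hΩ : IsOpen Ω) (hK : IsCompact K) (hKΩ : K ⊆ Ω)
    (v : ModNet Ω) (hv : ∀ ε, EqOn (v.1 ε) 0 (Ω \ K)) :
    Quot.mk (nulRel Ω) v ∈ GCompact Ω :=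
  ⟨v, rfl, K, hK, hKΩ,
    (Negligible.zero _).congr (hΩ.sdiff hK.isClosed) fun ε => (hv ε).symm⟩

lemma exists_mem_GCompact_negligible_sub (hΩ : IsOpen Ω) (hK : IsCompact K) (hKΩ : K ⊆ Ω)
    (u : Colombeau Ω) :
    ∃ v ∈ GCompact Ω, ∃ U : Set (Euc d), IsOpen U ∧ K ⊆ U ∧ U ⊆ Ω ∧
      Negligible U ((Quot.out v).1 - (Quot.out u).1) := by
  obtain ⟨χ, hχ, hχ_one, hχ_compact, hχ_supp⟩ := exists_contDiff_cutoff hΩ hK hKΩ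
  obtain ⟨U, hU, hKU, hχU⟩ := mem_nhdsSet_iff_exists.1 hχ_one
  have hχ_smooth : ContDiffOn ℝ ∞ (fun x => (χ x : ℂ)) Ω :=
    (Complex.ofRealCLM.contDiff.comp hχ).contDiffOn
  let χu : ModNet Ω := ⟨_, (Moderate.const hΩ hχ_smooth).mul hΩ (Quot.out u).2⟩
  refine ⟨Quot.mk _ χu, mk_mem_GCompact_of_eqOn_zero hΩ hχ_compact hχ_supp χu fun ε x hx => ?_,
    U ∩ Ω, hU.inter hΩ, subset_inter hKU hKΩ, inter_subset_right, ?_⟩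
  · simp [χu, image_eq_zero_of_notMem_tsupport hx.2]
  · have hout : nulRel Ω (Quot.out (Quot.mk (nulRel Ω) χu)) χu :=
      ((nulRel_equivalence hΩ).quot_mk_eq_iff _ _).1 (Quot.out_eq _)
    refine (hout.mono inter_subset_right).congr (hU.inter hΩ) fun ε x hx => ?_
    have hχx : χ x = 1 := hχU hx.1
    simp [χu, hχx]

end Density

/-- 𝒢_c(Ω) is dense in 𝒢(Ω) for the sharp topology. -/
theorem GCompact_dense {d : ℕ} (Ω : Set (Euc d)) (hΩ : IsOpen Ω) :
    @Dense (Colombeau Ω) (sharpTopology Ω) (GCompact Ω) := by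
  let := sharpTopology Ω
  refine (TopologicalSpace.isTopologicalBasis_of_subbasis rfl).dense_iff.2 ?_
  rintro _ ⟨S, ⟨hSfin, hS⟩, rfl⟩ ⟨u, hu⟩
  have : Nonempty (Colombeau Ω) := ⟨u⟩
  choose! w α K r hK hKΩ _ hball using fun B (hB : B ∈ S) => hS hB
  obtain ⟨v, hv, U, hU, hKU, hUΩ, hvu⟩ := exists_mem_GCompact_negligible_sub hΩ
    (hSfin.isCompact_biUnion hK) (iUnion₂_subset hKΩ) u
  refine ⟨v, fun B hB => ?_, hv⟩
  have hKB : K B ⊆ U := (subset_biUnion_of_mem hB).trans hKU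
  have huB : PNormDiff Ω (α B) (K B) (w B) u < r B := (hball B hB).subset (hu B hB)
  rw [hball B hB]
  exact (PNormDiff_eq_of_negligible_sub hU hUΩ (hK B hB) hKB hvu (α B) (w B)).trans_lt huB

end
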